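/- Let a > 0 and r > 0, and let γ(a, r) be the Gamma distribution on (0,∞) with shape a and rate r (density r^a / Γ(a) · x^{a−1} e^{−r x}). Then ∫ log x dγ(a, r)(x) = ψ(a) − log r, where ψ(a) = deriv (log ∘ Γ) a is the digamma function. -/

import Mathlib

open MeasureTheory ProbabilityTheory

open Set Filter Topology Asymptotics

/-- The derivative of the Mellin transform of `t ↦ exp (-(r * t))` in the right half-plane. -/
theorem hasDerivAt_mellin_exp_neg_mul {r : ℝ} (hr : 0 < r) {s : ℂ} (hs : 0 < s.re) :
    HasDerivAt (mellin fun t : ℝ => (Real.exp (-(r * t)) : ℂ))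
      (mellin (fun t : ℝ => Real.log t • (Real.exp (-(r * t)) : ℂ)) s) s := by
  refine (mellin_hasDerivAt_of_isBigO_rpow (a := s.re + 1) (b := 0) ?_ ?_ (lt_add_one _) ?_ hs).2
  · exact (Continuous.continuousOn (by fun_prop)).locallyIntegrableOn measurableSet_Ioi
  · rw [← isBigO_norm_left]
    simp_rw [Complex.norm_real, isBigO_norm_left]
    simpa only [neg_mul] using (isLittleO_exp_neg_mul_rpow_atTop hr _).isBigO
  · simp_rw [neg_zero, Real.rpow_zero]
    refine isBigO_const_of_tendsto (?_ : Tendsto _ _ (𝓝 (1 : ℂ))) one_ne_zero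
    have h : Continuous fun t : ℝ => (Real.exp (-(r * t)) : ℂ) := by fun_prop
    simpa using (h.tendsto 0).mono_left nhdsWithin_le_nhds

/-- Differentiating `(1 / r) ^ s * Γ s = ∫ t ^ (s - 1) * exp (-(r * t))` under the integral sign. -/
theorem hasDerivAt_rpow_mul_Gamma {a r : ℝ} (ha : 0 < a) (hr : 0 < r) :
    HasDerivAt (fun s : ℝ => (1 / r) ^ s * Real.Gamma s)
      (∫ t in Ioi (0 : ℝ), t ^ (a - 1) * (Real.log t * Real.exp (-(r * t)))) a := by
  have h_mellin (f : ℝ → ℝ) (s : ℝ) :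
      mellin (fun t => (f t : ℂ)) s = ((∫ t in Ioi (0 : ℝ), t ^ (s - 1) * f t : ℝ) : ℂ) := by
    rw [mellin, ← integral_complex_ofReal]
    refine setIntegral_congr_fun measurableSet_Ioi fun t ht => ?_
    have ht : 0 < t := ht
    simp [Complex.ofReal_cpow ht.le]
  have h := (hasDerivAt_mellin_exp_neg_mul hr (s := (a : ℂ)) (by simpa using ha)).real_of_complex
  simp only [Complex.real_smul, ← Complex.ofReal_mul] at h
  simp only [h_mellin, Complex.ofReal_re] at h
  refine h.congr_of_eventuallyEq ?_
  filter_upwards [lt_mem_nhds ha] with s hs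
  exact (Real.integral_rpow_mul_exp_neg_mul_Ioi hs hr).symm

/-- Integration against the Gamma distribution as an integral over the positive half-line. -/
theorem integral_gammaMeasure {a r : ℝ} (ha : 0 < a) (hr : 0 < r) (f : ℝ → ℝ) :
    ∫ x, f x ∂(gammaMeasure a r) =
      r ^ a / Real.Gamma a * ∫ x in Ioi (0 : ℝ), x ^ (a - 1) * (f x * Real.exp (-(r * x))) := by
  have h_pdf : gammaPDF a r = fun x => ENNReal.ofReal (gammaPDFReal a r x) := rfl
  rw [gammaMeasure, h_pdf, integral_withDensity_eq_integral_toReal_smul (by fun_prop) (by simp),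
    ← integral_const_mul, ← integral_Ici_eq_integral_Ioi, ← integral_indicator measurableSet_Ici]
  congr 1 with x
  rw [ENNReal.toReal_ofReal (gammaPDFReal_nonneg ha hr x), smul_eq_mul, gammaPDFReal,
    indicator_apply]
  by_cases hx : 0 ≤ x
  · simp only [hx, if_true, mem_Ici]
    ring
  · simp [hx]

/-- Expected logarithm under a Gamma distribution with shape `a > 0` and rate `r > 0`:
`∫ log x dγ(a,r)(x) = ψ(a) − log r`, where `ψ = deriv (log ∘ Γ)` is the digamma
function. -/
theorem integral_log_gammaMeasure {a r : ℝ} (ha : 0 < a) (hr : 0 < r) :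
    ∫ x, Real.log x ∂(gammaMeasure a r) =
      deriv (Real.log ∘ Real.Gamma) a - Real.log r := by
  have h_Gamma : HasDerivAt Real.Gamma (deriv Real.Gamma a) a :=
    (Real.differentiableAt_Gamma fun m => by
      have : (0 : ℝ) ≤ m := m.cast_nonneg
      linarith).hasDerivAt
  have hG : Real.Gamma a ≠ 0 := (Real.Gamma_pos_of_pos ha).ne'
  have h_pow : HasDerivAt (fun s : ℝ => (1 / r) ^ s) ((1 / r) ^ a * Real.log (1 / r)) a :=
    Real.hasStrictDerivAt_const_rpow (by positivity) a |>.hasDerivAt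
  have h_log : deriv (Real.log ∘ Real.Gamma) a = deriv Real.Gamma a / Real.Gamma a :=
    (h_Gamma.log hG).deriv
  rw [integral_gammaMeasure ha hr, (hasDerivAt_rpow_mul_Gamma ha hr).unique (h_pow.mul h_Gamma),
    h_log, one_div, Real.inv_rpow hr.le, Real.log_inv]
  have hra : r ^ a ≠ 0 := (Real.rpow_pos_of_pos hr a).ne'
  field_simp
  ring
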